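/- Let M be a projective left R-module such that every submodule of M is M-generated, and assume M is strongly harmonic and the lattice Λ^{fi}(M) of fully invariant submodules is compact. Then the operator Ler is idempotent: Ler(Ler(N)) = Ler(N) for every fully invariant submodule N of M. -/

import Mathlib

/-!
Write `N · L` for `SmProd N L`. The core is a normality property of the lattice of fully invariant
submodules (`exists_separation`): if `A ⊔ B = ⊤`, there are fully invariant `X`, `Y` with
`A ⊔ X = ⊤`, `B ⊔ Y = ⊤` and `Y · X = ⊥`.

Compactness puts every proper fully invariant submodule below a maximal one (`exists_isMaxFI`), and
since `⊤ · L = L`, maximal ones are prime (`IsMaxFI.inf_le`). A maximal `P ≥ A` and a maximal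
`Q ≥ B` are distinct, so strong harmonicity separates them. Two compactness arguments
(`exists_sup_eq_top`) glue these local separations together, first over `Q` and then over `P`.
The glueing takes finite sums on one side of the product and finite intersections on the other:
primeness controls the intersections, and additivity of `·` in each variable the sums.
Additivity in the right variable is where projectivity enters, as a map `M → X₁ + X₂` has to be
split as a sum of maps `M → X₁` and `M → X₂`.

Now let `N ⊔ AnnM K = ⊤`. Normality for `A = AnnM K`, `B = N` gives `X`, `Y`. As `Y ≤ AnnM X`,
also `N ⊔ AnnM X = ⊤`, so `X ≤ Ler N`, and hence `Ler N ⊔ AnnM K = ⊤`, that is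
`K ≤ Ler (Ler N)`. The other inclusion is the general fact `Ler L ≤ L` for `L` fully invariant:
if `L ⊔ AnnM K = ⊤` then `K = ⊤ · K = L · K ≤ L`.
-/

open Submodule

variable {R : Type*} [Ring R] {M : Type*} [AddCommGroup M] [Module R M]

/-- The product `N ·_M L = Σ { f(N) : f ∈ Hom_R(M, L) }` of submodules of `M`. -/
def SmProd (N L : Submodule R M) : Submodule R M :=
  ⨆ f : M →ₗ[R] L, N.map (L.subtype ∘ₗ f)

/-- A submodule is fully invariant if it is stable under every endomorphism of `M`. -/
def IsFI (N : Submodule R M) : Prop :=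
  ∀ f : M →ₗ[R] M, N.map f ≤ N

/-- `N` is a maximal proper fully invariant submodule of `M`
(a coatom of the lattice of fully invariant submodules). -/
def IsMaxFI (N : Submodule R M) : Prop :=
  IsFI N ∧ N ≠ ⊤ ∧ ∀ L : Submodule R M, IsFI L → N < L → L = ⊤

/-- `M` is strongly harmonic if for every pair of distinct maximal proper fully invariant
submodules `N, L` there are fully invariant `N', L'` with `N' ⊄ N`, `L' ⊄ L`, `L' ·_M N' = 0`. -/
def StronglyHarmonic (R M : Type*) [Ring R] [AddCommGroup M] [Module R M] : Prop :=
  ∀ N L : Submodule R M, IsMaxFI N → IsMaxFI L → N ≠ L →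
    ∃ N' L' : Submodule R M, IsFI N' ∧ IsFI L' ∧ ¬ N' ≤ N ∧ ¬ L' ≤ L ∧ SmProd L' N' = ⊥

/-- `Ann_M(K) = Σ { L ≤ M : L ·_M K = 0 }`. -/
def AnnM (K : Submodule R M) : Submodule R M :=
  sSup {L : Submodule R M | SmProd L K = ⊥}

/-- `Ler(N) = Σ { K fully invariant : N + Ann_M(K) = M }`. -/
def Ler (N : Submodule R M) : Submodule R M :=
  sSup {K : Submodule R M | IsFI K ∧ N ⊔ AnnM K = ⊤}

/-- `M` is quasi-projective. -/
def QuasiProjective (R M : Type*) [Ring R] [AddCommGroup M] [Module R M] : Prop :=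
  ∀ (K : Submodule R M) (h : M →ₗ[R] M ⧸ K), ∃ g : M →ₗ[R] M, K.mkQ ∘ₗ g = h

/-- The lattice `Λ^{fi}(M)` of fully invariant submodules is compact. -/
def FICompact (R M : Type*) [Ring R] [AddCommGroup M] [Module R M] : Prop :=
  ∀ S : Set (Submodule R M), (∀ N ∈ S, IsFI N) → sSup S = ⊤ →
    ∃ F : Finset (Submodule R M), ↑F ⊆ S ∧ sSup (F : Set (Submodule R M)) = ⊤

/-- The lattice `Λ^{fi}(M)` is normal. -/
def FINormal (R M : Type*) [Ring R] [AddCommGroup M] [Module R M] : Prop :=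
  ∀ N L : Submodule R M, IsFI N → IsFI L → N ⊔ L = ⊤ →
    ∃ N' L' : Submodule R M, IsFI N' ∧ IsFI L' ∧
      N ⊔ L' = ⊤ ∧ N' ⊔ L = ⊤ ∧ SmProd N' L' = ⊥

/-- Gelfand module. -/
def Gelfand (R M : Type*) [Ring R] [AddCommGroup M] [Module R M] : Prop :=
  ∀ N L : Submodule R M, IsCoatom N → IsCoatom L → N ≠ L →
    ∃ N' L' : Submodule R M, IsFI N' ∧ IsFI L' ∧ ¬ N' ≤ N ∧ ¬ L' ≤ L ∧ SmProd L' N' = ⊥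

/-- The hull-kernel topology on `mx^{fi}(M)`, generated by the sets
`m(K) = {𝓜 : K ⊄ 𝓜}` for `K` fully invariant. -/
def mxfiTop (R M : Type*) [Ring R] [AddCommGroup M] [Module R M] :
    TopologicalSpace {N : Submodule R M // IsMaxFI N} :=
  TopologicalSpace.generateFrom
    {U | ∃ K : Submodule R M, IsFI K ∧ U = {𝓜 : {N : Submodule R M // IsMaxFI N} | ¬ K ≤ 𝓜.1}}

/-- The frame `Ψ(M)`. -/
def PsiSet (R M : Type*) [Ring R] [AddCommGroup M] [Module R M] : Set (Submodule R M) :=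
  {N | IsFI N ∧ ∀ n ∈ N, N ⊔ AnnM (Submodule.span R {n}) = ⊤}

/-- The points (`∧`-irreducible elements) of `Ψ(M)`. -/
def PsiPt (R M : Type*) [Ring R] [AddCommGroup M] [Module R M] : Set (Submodule R M) :=
  {p | p ∈ PsiSet R M ∧ p ≠ ⊤ ∧
    ∀ N ∈ PsiSet R M, ∀ L ∈ PsiSet R M, N ⊓ L ≤ p → N ≤ p ∨ L ≤ p}

/-- The topology on the point space of `Ψ(M)`, with opens generated by
`U(N) = {p : N ⊄ p}` for `N ∈ Ψ(M)`. -/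
def psiPtTop (R M : Type*) [Ring R] [AddCommGroup M] [Module R M] :
    TopologicalSpace (PsiPt R M) :=
  TopologicalSpace.generateFrom
    {U | ∃ N ∈ PsiSet R M, U = {p : PsiPt R M | ¬ N ≤ p.1}}

/-- The product expressed through endomorphisms of `M` with values in `L`. -/
lemma smProd_le_iff {N L P : Submodule R M} :
    SmProd N L ≤ P ↔ ∀ f : M →ₗ[R] M, (∀ x, f x ∈ L) → ∀ n ∈ N, f n ∈ P := by
  unfold SmProd
  rw [iSup_le_iff]
  constructor
  · intro h f hf n hn
    exact h (f.codRestrict L hf) (Submodule.mem_map.2 ⟨n, hn, rfl⟩)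
  · intro h f
    rw [Submodule.map_le_iff_le_comap]
    intro n hn
    exact h (L.subtype ∘ₗ f) (fun x => (f x).2) n hn

lemma smProd_eq_bot_iff {N L : Submodule R M} :
    SmProd N L = ⊥ ↔ ∀ f : M →ₗ[R] M, (∀ x, f x ∈ L) → ∀ n ∈ N, f n = 0 := by
  rw [← le_bot_iff, smProd_le_iff]
  simp only [Submodule.mem_bot]

lemma smProd_mono_eq_bot {N N' L L' : Submodule R M} (hN : N' ≤ N) (hL : L' ≤ L)
    (h : SmProd N L = ⊥) : SmProd N' L' = ⊥ := by
  rw [smProd_eq_bot_iff] at h ⊢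
  exact fun f hf n hn => h f (fun x => hL (hf x)) n (hN hn)

lemma smProd_sup_le {N₁ N₂ L P : Submodule R M} (h₁ : SmProd N₁ L ≤ P) (h₂ : SmProd N₂ L ≤ P) :
    SmProd (N₁ ⊔ N₂) L ≤ P := by
  rw [smProd_le_iff] at h₁ h₂ ⊢
  intro f hf n hn
  exact (sup_le (h₁ f hf) (h₂ f hf) : N₁ ⊔ N₂ ≤ P.comap f) hn

/-- Vanishing of products is additive in the right variable: a map `M → L₁ + L₂` lifts along
`L₁ × L₂ → L₁ + L₂` by projectivity. -/
lemma smProd_sup_right_eq_bot [Module.Projective R M] {N L₁ L₂ : Submodule R M}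
    (h₁ : SmProd N L₁ = ⊥) (h₂ : SmProd N L₂ = ⊥) : SmProd N (L₁ ⊔ L₂) = ⊥ := by
  rw [smProd_eq_bot_iff] at h₁ h₂ ⊢
  intro f hf n hn
  let s : (L₁ × L₂) →ₗ[R] ↥(L₁ ⊔ L₂) :=
    (Submodule.inclusion le_sup_left).coprod (Submodule.inclusion le_sup_right)
  have hs : Function.Surjective s := by
    rintro ⟨x, hx⟩
    obtain ⟨a, ha, b, hb, rfl⟩ := Submodule.mem_sup.1 hx
    exact ⟨(⟨a, ha⟩, ⟨b, hb⟩), Subtype.ext (by simp [s])⟩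
  obtain ⟨g, hg⟩ := Module.projective_lifting_property s (f.codRestrict _ hf) hs
  have e : f n = ((g n).1 : M) + ((g n).2 : M) := by
    have := congrArg Subtype.val (LinearMap.congr_fun hg n)
    simpa [s] using this.symm
  have e₁ := h₁ (L₁.subtype ∘ₗ LinearMap.fst R L₁ L₂ ∘ₗ g) (fun x => (g x).1.2) n hn
  have e₂ := h₂ (L₂.subtype ∘ₗ LinearMap.snd R L₁ L₂ ∘ₗ g) (fun x => (g x).2.2) n hn
  simp only [LinearMap.comp_apply, LinearMap.fst_apply, LinearMap.snd_apply,
    Submodule.subtype_apply] at e₁ e₂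
  rw [e, e₁, e₂, add_zero]

lemma IsFI.smProd_le_left {N L : Submodule R M} (hN : IsFI N) : SmProd N L ≤ N :=
  smProd_le_iff.2 fun f _ _ hn => hN f (Submodule.mem_map_of_mem hn)

lemma smProd_le_right {N L : Submodule R M} : SmProd N L ≤ L :=
  smProd_le_iff.2 fun _ hf n _ => hf n

lemma isFI_bot : IsFI (⊥ : Submodule R M) := fun f => by simp

lemma isFI_top : IsFI (⊤ : Submodule R M) := fun _ => le_top

lemma isFI_sSup {S : Set (Submodule R M)} (h : ∀ N ∈ S, IsFI N) : IsFI (sSup S) := by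
  intro f
  rw [Submodule.map_le_iff_le_comap]
  refine sSup_le fun N hN => ?_
  rw [← Submodule.map_le_iff_le_comap]
  exact (h N hN f).trans (le_sSup hN)

lemma IsFI.sup {N L : Submodule R M} (hN : IsFI N) (hL : IsFI L) : IsFI (N ⊔ L) := by
  intro f
  rw [Submodule.map_sup]
  exact sup_le_sup (hN f) (hL f)

lemma IsFI.inf {N L : Submodule R M} (hN : IsFI N) (hL : IsFI L) : IsFI (N ⊓ L) := fun f =>
  le_inf ((Submodule.map_mono inf_le_left).trans (hN f))
    ((Submodule.map_mono inf_le_right).trans (hL f))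

lemma smProd_annM (K : Submodule R M) : SmProd (AnnM K) K = ⊥ := by
  rw [smProd_eq_bot_iff]
  intro f hf n hn
  have h : AnnM K ≤ LinearMap.ker f := sSup_le fun L hL n hn => smProd_eq_bot_iff.1 hL f hf n hn
  exact h hn

lemma isFI_annM (K : Submodule R M) : IsFI (AnnM K) := by
  intro g
  refine le_sSup ?_
  rw [Set.mem_ofPred_eq, smProd_eq_bot_iff]
  rintro f hf _ ⟨n, hn, rfl⟩
  exact smProd_eq_bot_iff.1 (smProd_annM K) (f ∘ₗ g) (fun x => hf (g x)) n hn

lemma isFI_ler (N : Submodule R M) : IsFI (Ler N) := isFI_sSup fun _ h => h.1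

lemma ler_le (hgen : ∀ L : Submodule R M, SmProd ⊤ L = L) {N : Submodule R M} (hN : IsFI N) :
    Ler N ≤ N := by
  refine sSup_le fun K hK => ?_
  rw [← hgen K, ← hK.2]
  exact smProd_sup_le hN.smProd_le_left ((smProd_annM K).trans_le bot_le)

/-- Maximal fully invariant submodules are prime. -/
lemma IsMaxFI.inf_le (hgen : ∀ L : Submodule R M, SmProd ⊤ L = L) {P X Y : Submodule R M}
    (hP : IsMaxFI P) (hX : IsFI X) (h : X ⊓ Y ≤ P) : X ≤ P ∨ Y ≤ P := by
  by_contra! hc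
  have htop : P ⊔ X = ⊤ := hP.2.2 _ (hP.1.sup hX) (left_lt_sup.2 hc.1)
  apply hc.2
  rw [← hgen Y, ← htop]
  exact smProd_sup_le hP.1.smProd_le_left ((le_inf hX.smProd_le_left smProd_le_right).trans h)

lemma exists_isMaxFI (hcomp : FICompact R M) {N : Submodule R M} (hN : IsFI N) (hN' : N ≠ ⊤) :
    ∃ P, IsMaxFI P ∧ N ≤ P := by
  obtain ⟨P, hNP, hP⟩ := zorn_le_nonempty₀ {L : Submodule R M | IsFI L ∧ L ≠ ⊤} (by
    intro c hc hchain y hy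
    refine ⟨sSup c, ⟨isFI_sSup fun L hL => (hc hL).1, fun htop => ?_⟩, fun z hz => le_sSup hz⟩
    obtain ⟨F, hF, hFt⟩ := hcomp c (fun L hL => (hc hL).1) htop
    -- A finite subset of the chain has an upper bound in the chain.
    obtain ⟨z, hz, hFz⟩ :=
      Finset.sup_le_of_le_directed c ⟨y, hy⟩ hchain.directedOn F fun L hL => ⟨L, hF hL, le_rfl⟩
    exact (hc hz).2 (top_le_iff.1 (hFt ▸ (Finset.sup_id_eq_sSup F).ge.trans hFz))) N ⟨hN, hN'⟩
  refine ⟨P, ⟨hP.prop.1, hP.prop.2, fun L hL hlt => ?_⟩, hNP⟩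
  by_contra hne
  exact hlt.not_ge (hP.le_of_ge ⟨hL, hne⟩ hlt.le)

/-- Compactness argument: a family `T` of fully invariant submodules, closed under finite sums,
that for every maximal `Q ≥ B` has a member not below `Q`, has a member comaximal with `B`. -/
lemma exists_sup_eq_top (hcomp : FICompact R M) {B : Submodule R M} (hB : IsFI B)
    {T : Set (Submodule R M)} (hT : ∀ Y ∈ T, IsFI Y) (hbot : ⊥ ∈ T)
    (hsup : ∀ Y ∈ T, ∀ Z ∈ T, Y ⊔ Z ∈ T)
    (hmax : ∀ Q, IsMaxFI Q → B ≤ Q → ∃ Y ∈ T, ¬ Y ≤ Q) : ∃ Y ∈ T, B ⊔ Y = ⊤ := by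
  have hFI : ∀ N ∈ insert B T, IsFI N := by
    rintro N (rfl | hN)
    exacts [hB, hT N hN]
  have htop : sSup (insert B T) = ⊤ := by
    by_contra hne
    obtain ⟨Q, hQ, hle⟩ := exists_isMaxFI hcomp (isFI_sSup hFI) hne
    obtain ⟨Y, hY, hYQ⟩ := hmax Q hQ ((le_sSup (Set.mem_insert _ _)).trans hle)
    exact hYQ ((le_sSup (Set.mem_insert_of_mem _ hY)).trans hle)
  obtain ⟨F, hF, hFt⟩ := hcomp _ hFI htop
  have key : ∀ G : Finset (Submodule R M), (G : Set (Submodule R M)) ⊆ insert B T →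
      ∃ Y ∈ T, ∀ Z ∈ G, Z ≤ B ⊔ Y := by
    classical
    intro G
    induction G using Finset.induction_on with
    | empty => exact fun _ => ⟨⊥, hbot, by simp⟩
    | insert Z G _ ih =>
      intro hG
      obtain ⟨Y, hY, hGY⟩ := ih fun W hW => hG (by simp [Finset.mem_coe.1 hW])
      rcases hG (by simp : Z ∈ _) with rfl | hZ
      · refine ⟨Y, hY, fun W hW => ?_⟩
        rcases Finset.mem_insert.1 hW with rfl | hW
        exacts [le_sup_left, hGY W hW]
      · refine ⟨Y ⊔ Z, hsup Y hY Z hZ, fun W hW => ?_⟩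
        rcases Finset.mem_insert.1 hW with rfl | hW
        · exact le_sup_right.trans le_sup_right
        · exact (hGY W hW).trans (sup_le_sup_left le_sup_left _)
  obtain ⟨Y, hY, hle⟩ := key F hF
  exact ⟨Y, hY, top_le_iff.1 (hFt ▸ sSup_le hle)⟩

/-- Normality of the lattice of fully invariant submodules. -/
lemma exists_separation [Module.Projective R M] (hgen : ∀ L : Submodule R M, SmProd ⊤ L = L)
    (hsh : StronglyHarmonic R M) (hcomp : FICompact R M) {A B : Submodule R M}
    (hA : IsFI A) (hB : IsFI B) (hAB : A ⊔ B = ⊤) :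
    ∃ X Y : Submodule R M, IsFI X ∧ IsFI Y ∧ A ⊔ X = ⊤ ∧ B ⊔ Y = ⊤ ∧ SmProd Y X = ⊥ := by
  -- Separation of a single maximal `P ≥ A` from `B`.
  have local_sep : ∀ P, IsMaxFI P → A ≤ P →
      ∃ X Y : Submodule R M, IsFI X ∧ IsFI Y ∧ ¬ X ≤ P ∧ B ⊔ Y = ⊤ ∧ SmProd Y X = ⊥ := by
    intro P hP hAP
    obtain ⟨Y, ⟨hY, X, hX, hXP, hYX⟩, hBY⟩ := exists_sup_eq_top hcomp hB
      (T := {Y | IsFI Y ∧ ∃ X, IsFI X ∧ ¬ X ≤ P ∧ SmProd Y X = ⊥}) (fun _ h => h.1)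
      ⟨isFI_bot, ⊤, isFI_top, fun h => hP.2.1 (top_le_iff.1 h),
        le_bot_iff.1 isFI_bot.smProd_le_left⟩
      (by
        rintro Y₁ ⟨hY₁, X₁, hX₁, hXP₁, h₁⟩ Y₂ ⟨hY₂, X₂, hX₂, hXP₂, h₂⟩
        refine ⟨hY₁.sup hY₂, X₁ ⊓ X₂, hX₁.inf hX₂, fun h => ?_, ?_⟩
        · exact (hP.inf_le hgen hX₁ h).elim hXP₁ hXP₂
        · exact le_bot_iff.1 (smProd_sup_le
            (smProd_mono_eq_bot le_rfl inf_le_left h₁).le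
            (smProd_mono_eq_bot le_rfl inf_le_right h₂).le))
      (by
        intro Q hQ hBQ
        have hne : P ≠ Q := by
          rintro rfl
          exact hP.2.1 (top_le_iff.1 (hAB ▸ sup_le hAP hBQ))
        obtain ⟨X, Y, hX, hY, hXP, hYQ, h⟩ := hsh P Q hP hQ hne
        exact ⟨Y, ⟨hY, X, hX, hXP, h⟩, hYQ⟩)
    exact ⟨X, Y, hX, hY, hXP, hBY, hYX⟩
  obtain ⟨X, ⟨hX, Y, hY, hBY, hYX⟩, hAX⟩ := exists_sup_eq_top hcomp hA
    (T := {X | IsFI X ∧ ∃ Y, IsFI Y ∧ B ⊔ Y = ⊤ ∧ SmProd Y X = ⊥}) (fun _ h => h.1)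
    ⟨isFI_bot, ⊤, isFI_top, sup_top_eq B, le_bot_iff.1 smProd_le_right⟩
    (by
      rintro X₁ ⟨hX₁, Y₁, hY₁, hB₁, h₁⟩ X₂ ⟨hX₂, Y₂, hY₂, hB₂, h₂⟩
      refine ⟨hX₁.sup hX₂, Y₁ ⊓ Y₂, hY₁.inf hY₂, ?_, ?_⟩
      · by_contra hne
        -- A maximal `Q` above `B ⊔ (Y₁ ⊓ Y₂)` would contain `Y₁` or `Y₂`, hence be `⊤`.
        obtain ⟨Q, hQ, hle⟩ := exists_isMaxFI hcomp (hB.sup (hY₁.inf hY₂)) hne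
        have hBQ : B ≤ Q := le_sup_left.trans hle
        rcases hQ.inf_le hgen hY₁ (le_sup_right.trans hle) with h | h
        · exact hQ.2.1 (top_le_iff.1 (hB₁ ▸ sup_le hBQ h))
        · exact hQ.2.1 (top_le_iff.1 (hB₂ ▸ sup_le hBQ h))
      · exact smProd_sup_right_eq_bot (smProd_mono_eq_bot inf_le_left le_rfl h₁)
          (smProd_mono_eq_bot inf_le_right le_rfl h₂))
    (by
      intro P hP hAP
      obtain ⟨X, Y, hX, hY, hXP, hBY, h⟩ := local_sep P hP hAP
      exact ⟨X, ⟨hX, Y, hY, hBY, h⟩, hXP⟩)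
  exact ⟨X, Y, hX, hY, hAX, hBY, hYX⟩

/-- For `M` projective, every submodule `M`-generated, `M` strongly harmonic
and `Λ^{fi}(M)` compact, the operator `Ler` is idempotent on fully invariant submodules. -/
theorem ler_idempotent (hproj : Module.Projective R M)
    (hgen : ∀ L : Submodule R M, SmProd ⊤ L = L)
    (hsh : StronglyHarmonic R M) (hcomp : FICompact R M) :
    ∀ N : Submodule R M, IsFI N → Ler (Ler N) = Ler N := by
  intro N hN
  refine le_antisymm (ler_le hgen (isFI_ler N)) (sSup_le fun K hK => le_sSup ⟨hK.1, ?_⟩)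
  obtain ⟨X, Y, hX, -, hAX, hNY, hYX⟩ :=
    exists_separation hgen hsh hcomp (isFI_annM K) hN (sup_comm N (AnnM K) ▸ hK.2)
  have hYA : Y ≤ AnnM X := le_sSup hYX
  have hXN : X ≤ Ler N := le_sSup ⟨hX, top_le_iff.1 (hNY ▸ sup_le_sup_left hYA N)⟩
  exact top_le_iff.1 (hAX ▸ sup_le le_sup_right (hXN.trans le_sup_left))
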